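/- Lower bound for privacy leakage (single-client version): under the conditional-density setup, let P and Q be probability measures on 𝒲, let F̆ be a probability measure on 𝒟, and let ξ ≥ 0 be such that for every d ∈ 𝒟 the map w ↦ f(d, w) is bounded with 0 < inf_{w∈𝒲} f(d, w) and sup_{w∈𝒲} f(d, w) ≤ e^{2ξ} · inf_{w∈𝒲} f(d, w). Then √(JS(G_Q ‖ F̆)) ≥ √(JS(G_P ‖ F̆)) − (1/2)(e^{2ξ} − 1) · TV(P, Q). -/

import Mathlib

open MeasureTheory
open scoped ENNReal

/-- Total variation distance between two measures: the supremum over measurable sets `A`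
of `|P(A) − Q(A)|`. -/
noncomputable def tvDist {Ω : Type*} [MeasurableSpace Ω] (P Q : Measure Ω) : ℝ :=
  ⨆ A : {s : Set Ω // MeasurableSet s}, |(P A.1).toReal - (Q A.1).toReal|

/-- Kullback–Leibler divergence `KL(μ₁ ‖ μ₂) = ∫ log(dμ₁/dμ₂) dμ₁`. -/
noncomputable def klDiv {Ω : Type*} [MeasurableSpace Ω] (μ₁ μ₂ : Measure Ω) : ℝ :=
  ∫ x, llr μ₁ μ₂ x ∂μ₁

/-- Jensen–Shannon divergence `JS(μ₁ ‖ μ₂) = (1/2) KL(μ₁ ‖ m) + (1/2) KL(μ₂ ‖ m)` with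
`m = (μ₁ + μ₂)/2`. -/
noncomputable def jsDiv {Ω : Type*} [MeasurableSpace Ω] (μ₁ μ₂ : Measure Ω) : ℝ :=
  (1 / 2) * klDiv μ₁ ((2 : ℝ≥0∞)⁻¹ • (μ₁ + μ₂)) + (1 / 2) * klDiv μ₂ ((2 : ℝ≥0∞)⁻¹ • (μ₁ + μ₂))

/-!
The square root of the Jensen–Shannon divergence is a Hilbertian distance: for `a, c ≥ 0`,
$$\frac12\Bigl(a\log\frac{2a}{a+c}+c\log\frac{2c}{a+c}\Bigr)
  =\int_0^\infty\Bigl(\frac{e^{-at}-e^{-ct}}{2t}\Bigr)^2\,dt,$$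
because integrating by parts against `1/t` turns the right-hand side into two Frullani integrals.
Minkowski's inequality, first in `t` and then in `d`, gives the triangle inequality
`√JS(G_P ‖ F) ≤ √JS(G_P ‖ G_Q) + √JS(G_Q ‖ F)`.

For the first term, put `C = e^{2ξ}`. The function `f(d, ·)` oscillates by at most
`(C - 1) inf_w f(d, w)`, so `|g_P(d) - g_Q(d)| ≤ k min(g_P(d), g_Q(d))` with
`k = (C - 1) TV(P, Q)`. The pointwise bound `log x ≤ x - 1` then yields
`JS(G_P ‖ G_Q) ≤ (k / 2)²`.
-/

open Set Filter Topology

/-- The pointwise Jensen–Shannon divergence of two nonnegative numbers: integrated along the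
densities of two measures, it yields their Jensen–Shannon divergence. The convention
`0 * log 0 = 0` is provided by `Real.log 0 = 0`. -/
noncomputable def jsFun (a c : ℝ) : ℝ :=
  1 / 2 * (a * Real.log (a / ((a + c) / 2)) + c * Real.log (c / ((a + c) / 2)))

section JsFun

variable {a b c : ℝ}

theorem half_sub_le_mul_log_div (ha : 0 ≤ a) (hc : 0 ≤ c) :
    (a - c) / 2 ≤ a * Real.log (a / ((a + c) / 2)) := by
  rcases ha.eq_or_lt with rfl | ha
  · linarith
  calc (a - c) / 2 = a * (1 - (a / ((a + c) / 2))⁻¹) := by field_simp; ring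
    _ ≤ a * Real.log (a / ((a + c) / 2)) := by
      gcongr
      exact Real.one_sub_inv_le_log_of_pos (by positivity)

theorem mul_log_div_le (ha : 0 ≤ a) (hc : 0 ≤ c) :
    a * Real.log (a / ((a + c) / 2)) ≤ a * ((a - c) / (a + c)) := by
  rcases ha.eq_or_lt with rfl | ha
  · simp
  calc a * Real.log (a / ((a + c) / 2)) ≤ a * (a / ((a + c) / 2) - 1) := by
        gcongr
        exact Real.log_le_sub_one_of_pos (by positivity)
    _ = a * ((a - c) / (a + c)) := by field_simp; ring

theorem abs_mul_log_div_le (ha : 0 ≤ a) (hc : 0 ≤ c) :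
    |a * Real.log (a / ((a + c) / 2))| ≤ a + c := by
  have hlow := half_sub_le_mul_log_div ha hc
  have hup := mul_log_div_le ha hc
  have hle : a * ((a - c) / (a + c)) ≤ a * 1 := by
    gcongr
    exact div_le_one_of_le₀ (by linarith) (by positivity)
  exact abs_le.2 ⟨by linarith, by linarith⟩

theorem jsFun_nonneg (ha : 0 ≤ a) (hc : 0 ≤ c) : 0 ≤ jsFun a c := by
  have h₁ := half_sub_le_mul_log_div ha hc
  have h₂ := half_sub_le_mul_log_div hc ha
  rw [add_comm c a] at h₂
  rw [jsFun]
  linarith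

theorem jsFun_le_sq_sub_div (ha : 0 ≤ a) (hc : 0 ≤ c) :
    jsFun a c ≤ (a - c) ^ 2 / (2 * (a + c)) := by
  have h₁ := mul_log_div_le ha hc
  have h₂ := mul_log_div_le hc ha
  rw [add_comm c a] at h₂
  calc jsFun a c ≤ 1 / 2 * (a * ((a - c) / (a + c)) + c * ((c - a) / (a + c))) := by
        rw [jsFun]; gcongr
    _ = (a - c) ^ 2 / (2 * (a + c)) := by rw [mul_comm 2 (a + c), ← div_div]; ring

theorem jsFun_le_of_abs_sub_le {k : ℝ} (ha : 0 ≤ a) (hc : 0 ≤ c) (hka : |a - c| ≤ k * a)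
    (hkc : |a - c| ≤ k * c) : jsFun a c ≤ (k / 2) ^ 2 * a := by
  have hka0 : 0 ≤ k * a := (abs_nonneg _).trans hka
  have haa : (a - c) ^ 2 ≤ k * a * (k * a) := by
    rw [← sq_abs, sq]
    exact mul_le_mul hka hka (abs_nonneg _) hka0
  have hac : (a - c) ^ 2 ≤ k * a * (k * c) := by
    rw [← sq_abs, sq]
    exact mul_le_mul hka hkc (abs_nonneg _) hka0
  calc jsFun a c ≤ (a - c) ^ 2 / (2 * (a + c)) := jsFun_le_sq_sub_div ha hc
    _ ≤ (k / 2) ^ 2 * a := div_le_of_le_mul₀ (by positivity) (by positivity) (by linarith)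

theorem abs_exp_sub_exp_le (x y : ℝ) :
    |Real.exp x - Real.exp y| ≤ |x - y| * Real.exp (max x y) := by
  wlog hyx : y ≤ x generalizing x y
  · rw [abs_sub_comm, abs_sub_comm x, max_comm]
    exact this y x (le_of_not_ge hyx)
  rw [max_eq_left hyx, abs_of_nonneg (sub_nonneg.2 (Real.exp_le_exp.2 hyx)),
    abs_of_nonneg (sub_nonneg.2 hyx)]
  have h : y - x + 1 ≤ Real.exp (y - x) := Real.add_one_le_exp _
  calc Real.exp x - Real.exp y = (1 - Real.exp (y - x)) * Real.exp x := by
        rw [sub_mul, ← Real.exp_add]; simp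
    _ ≤ (x - y) * Real.exp x :=
      mul_le_mul_of_nonneg_right (by linarith) (Real.exp_pos x).le

theorem abs_exp_neg_mul_sub_le {t : ℝ} (ht : 0 ≤ t) :
    |Real.exp (-(a * t)) - Real.exp (-(b * t))| ≤ |a - b| * t * Real.exp (-(min a b * t)) := by
  refine (abs_exp_sub_exp_le _ _).trans_eq ?_
  rw [max_neg_neg, ← min_mul_of_nonneg _ _ ht, neg_sub_neg, ← sub_mul, abs_mul, abs_of_nonneg ht,
    abs_sub_comm]

theorem integrableOn_inv_mul_exp_neg_sub (ha : 0 < a) (hb : 0 < b) :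
    IntegrableOn (fun t => t⁻¹ * (Real.exp (-(a * t)) - Real.exp (-(b * t)))) (Ioi 0) := by
  have hdom : IntegrableOn (fun t => |a - b| * Real.exp (-min a b * t)) (Ioi 0) :=
    (exp_neg_integrableOn_Ioi 0 (lt_min ha hb)).const_mul _
  refine hdom.mono' (by fun_prop) ((ae_restrict_iff' measurableSet_Ioi).2 (ae_of_all _ ?_))
  intro t (ht : 0 < t)
  rw [norm_mul, norm_inv, Real.norm_eq_abs, Real.norm_eq_abs, abs_of_pos ht, inv_mul_le_iff₀ ht,
    neg_mul]
  exact (abs_exp_neg_mul_sub_le ht.le).trans_eq (by ring)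

theorem integral_inv_mul_exp_neg_sub (ha : 0 < a) (hb : 0 < b) :
    ∫ t in Ioi 0, t⁻¹ * (Real.exp (-(a * t)) - Real.exp (-(b * t))) = Real.log (b / a) := by
  have hcont : Continuous fun t : ℝ => Real.exp (-t) := by fun_prop
  have h := Frullani.integral_Ioi_eq (f := fun t => Real.exp (-t))
    (hcont.locallyIntegrable.locallyIntegrableOn _) ha hb
    (hcont.continuousWithinAt (s := Ioi 0) (x := 0)) Real.tendsto_exp_neg_atTop_nhds_zero
    (integrableOn_inv_mul_exp_neg_sub ha hb)
  simpa using h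

theorem integrableOn_mul_inv_mul_exp_neg_sub (ha : 0 ≤ a) (hc : 0 ≤ c) :
    IntegrableOn (fun t => a * (t⁻¹ * (Real.exp (-(2 * a * t)) - Real.exp (-((a + c) * t)))))
      (Ioi 0) := by
  rcases ha.eq_or_lt with rfl | ha
  · simp
  · exact (integrableOn_inv_mul_exp_neg_sub (by positivity) (by positivity)).const_mul a

theorem integral_mul_inv_mul_exp_neg_sub (ha : 0 ≤ a) (hc : 0 ≤ c) :
    ∫ t in Ioi 0, a * (t⁻¹ * (Real.exp (-(2 * a * t)) - Real.exp (-((a + c) * t)))) =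
      -(a * Real.log (a / ((a + c) / 2))) := by
  rcases ha.eq_or_lt with rfl | ha
  · simp
  rw [integral_const_mul, integral_inv_mul_exp_neg_sub (by positivity) (by positivity),
    ← mul_neg, ← Real.log_inv]
  congr 2
  field_simp

theorem sq_exp_neg_mul_sub_le {t : ℝ} (ht : 0 ≤ t) (ha : 0 ≤ a) (hc : 0 ≤ c) :
    (Real.exp (-(a * t)) - Real.exp (-(c * t))) ^ 2 ≤ (a - c) ^ 2 * t ^ 2 := by
  rw [← mul_pow, sq_le_sq, abs_mul, abs_of_nonneg ht]
  refine (abs_exp_neg_mul_sub_le ht).trans (mul_le_of_le_one_right (by positivity) ?_)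
  rw [Real.exp_le_one_iff]
  exact neg_nonpos.2 (mul_nonneg (le_min ha hc) ht)

theorem sq_exp_neg_mul_sub_le_one {t : ℝ} (ht : 0 ≤ t) (ha : 0 ≤ a) (hc : 0 ≤ c) :
    (Real.exp (-(a * t)) - Real.exp (-(c * t))) ^ 2 ≤ 1 := by
  have hexp {x : ℝ} (hx : 0 ≤ x) : Real.exp (-(x * t)) ≤ 1 :=
    Real.exp_le_one_iff.2 (neg_nonpos.2 (mul_nonneg hx ht))
  rw [sq_le_one_iff_abs_le_one, abs_le]
  constructor <;> linarith [hexp ha, hexp hc, Real.exp_pos (-(a * t)), Real.exp_pos (-(c * t))]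

theorem integrableOn_sq_exp_neg_sub_div (ha : 0 ≤ a) (hc : 0 ≤ c) :
    IntegrableOn (fun t => ((Real.exp (-(a * t)) - Real.exp (-(c * t))) / (2 * t)) ^ 2)
      (Ioi 0) := by
  have hmeas : Measurable fun t : ℝ =>
      ((Real.exp (-(a * t)) - Real.exp (-(c * t))) / (2 * t)) ^ 2 := by fun_prop
  refine (integrable_inv_one_add_sq.const_mul ((a - c) ^ 2 + 1)).integrableOn.mono'
    hmeas.aestronglyMeasurable ((ae_restrict_iff' measurableSet_Ioi).2 (ae_of_all _ ?_))
  intro t (ht : 0 < t)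
  have hsmall := sq_exp_neg_mul_sub_le ht.le ha hc
  have hlarge := mul_le_mul_of_nonneg_right (sq_exp_neg_mul_sub_le_one ht.le ha hc) (sq_nonneg t)
  rw [Real.norm_of_nonneg (sq_nonneg _), div_pow, ← div_eq_mul_inv,
    div_le_div_iff₀ (by positivity) (by positivity)]
  nlinarith [mul_nonneg (sq_nonneg (a - c)) (sq_nonneg t), sq_nonneg t]

theorem tendsto_sq_exp_neg_sub_mul_inv_nhdsGT_zero (ha : 0 ≤ a) (hc : 0 ≤ c) :
    Tendsto (fun t => (Real.exp (-(a * t)) - Real.exp (-(c * t))) ^ 2 * t⁻¹) (𝓝[>] 0) (𝓝 0) := by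
  have hlim : Tendsto (fun t : ℝ => (a - c) ^ 2 * t) (𝓝[>] 0) (𝓝 0) := by
    have h : Continuous fun t : ℝ => (a - c) ^ 2 * t := by fun_prop
    simpa using (h.tendsto 0).mono_left nhdsWithin_le_nhds
  refine squeeze_zero' ?_ ?_ hlim <;> filter_upwards [self_mem_nhdsWithin] with t (ht : 0 < t)
  · positivity
  · rw [mul_inv_le_iff₀ ht, mul_assoc, ← sq]
    exact sq_exp_neg_mul_sub_le ht.le ha hc

theorem tendsto_sq_exp_neg_sub_mul_inv_atTop (ha : 0 ≤ a) (hc : 0 ≤ c) :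
    Tendsto (fun t => (Real.exp (-(a * t)) - Real.exp (-(c * t))) ^ 2 * t⁻¹) atTop (𝓝 0) := by
  refine squeeze_zero' ?_ ?_ tendsto_inv_atTop_zero <;>
    filter_upwards [eventually_gt_atTop 0] with t ht
  · positivity
  · exact mul_le_of_le_one_left (by positivity) (sq_exp_neg_mul_sub_le_one ht.le ha hc)

theorem hasDerivAt_sq_exp_neg_sub (a c t : ℝ) :
    HasDerivAt (fun t => (Real.exp (-(a * t)) - Real.exp (-(c * t))) ^ 2)
      (2 * (Real.exp (-(a * t)) - Real.exp (-(c * t))) *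
        (c * Real.exp (-(c * t)) - a * Real.exp (-(a * t)))) t := by
  have hexp (x : ℝ) : HasDerivAt (fun t => Real.exp (-(x * t))) (Real.exp (-(x * t)) * -x) t := by
    simpa using ((hasDerivAt_id t).const_mul x).neg.exp
  refine (((hexp a).sub (hexp c)).pow 2).congr_deriv ?_
  simp only [Pi.sub_apply]
  ring

theorem deriv_sq_exp_neg_sub_mul_inv (a c t : ℝ) :
    2 * (Real.exp (-(a * t)) - Real.exp (-(c * t))) *
        (c * Real.exp (-(c * t)) - a * Real.exp (-(a * t))) * t⁻¹ =
      -2 * (a * (t⁻¹ * (Real.exp (-(2 * a * t)) - Real.exp (-((a + c) * t)))) +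
        c * (t⁻¹ * (Real.exp (-(2 * c * t)) - Real.exp (-((c + a) * t))))) := by
  have hprod (x y : ℝ) : Real.exp (-((x + y) * t)) = Real.exp (-(x * t)) * Real.exp (-(y * t)) := by
    rw [← Real.exp_add]; ring_nf
  simp only [two_mul a, two_mul c, hprod]
  ring

theorem jsFun_eq_integral (ha : 0 ≤ a) (hc : 0 ≤ c) :
    jsFun a c = ∫ t in Ioi 0, ((Real.exp (-(a * t)) - Real.exp (-(c * t))) / (2 * t)) ^ 2 := by
  set u : ℝ → ℝ := fun t => (Real.exp (-(a * t)) - Real.exp (-(c * t))) ^ 2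
  set u' : ℝ → ℝ := fun t => 2 * (Real.exp (-(a * t)) - Real.exp (-(c * t))) *
    (c * Real.exp (-(c * t)) - a * Real.exp (-(a * t))) with hu'
  have hsquare (t : ℝ) : u t * -(t ^ 2)⁻¹ =
      -4 * ((Real.exp (-(a * t)) - Real.exp (-(c * t))) / (2 * t)) ^ 2 := by
    rw [div_pow, mul_pow, div_eq_mul_inv, mul_inv]; ring
  have hint_a := integrableOn_mul_inv_mul_exp_neg_sub ha hc
  have hint_c := integrableOn_mul_inv_mul_exp_neg_sub hc ha
  have hfrullani : ∫ t in Ioi 0, u' t * t⁻¹ = 4 * jsFun a c := by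
    simp only [hu', deriv_sq_exp_neg_sub_mul_inv]
    rw [integral_const_mul, integral_add hint_a hint_c, integral_mul_inv_mul_exp_neg_sub ha hc,
      integral_mul_inv_mul_exp_neg_sub hc ha, jsFun, add_comm c a]
    ring
  have hparts : ∫ t in Ioi 0, u t * -(t ^ 2)⁻¹ = 0 - 0 - ∫ t in Ioi 0, u' t * t⁻¹ := by
    refine integral_Ioi_mul_deriv_eq_deriv_mul (v := fun t => t⁻¹)
      (fun t _ => hasDerivAt_sq_exp_neg_sub a c t) (fun t ht => hasDerivAt_inv (ne_of_gt ht)) ?_ ?_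
      (tendsto_sq_exp_neg_sub_mul_inv_nhdsGT_zero ha hc)
      (tendsto_sq_exp_neg_sub_mul_inv_atTop ha hc)
    · simp only [Pi.mul_def, hsquare]
      exact (integrableOn_sq_exp_neg_sub_div ha hc).const_mul (-4)
    · simp only [Pi.mul_def, hu', deriv_sq_exp_neg_sub_mul_inv]
      exact (hint_a.add hint_c).const_mul (-2)
  simp only [hsquare, integral_const_mul, hfrullani] at hparts
  linarith

end JsFun

section Minkowski

variable {α : Type*} [MeasurableSpace α] {ν : Measure α} {A B C : α → ℝ}

theorem memLp_two_sqrt (hA : Integrable A ν) : MemLp (fun x => √(A x)) 2 ν := by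
  refine (memLp_two_iff_integrable_sq
    hA.aestronglyMeasurable.aemeasurable.sqrt.aestronglyMeasurable).2 ?_
  simpa only [Real.sq_sqrt'] using hA.pos_part

theorem eLpNorm_two_sqrt (hA : Integrable A ν) (hA₀ : 0 ≤ᵐ[ν] A) :
    eLpNorm (fun x => √(A x)) 2 ν = ENNReal.ofReal √(∫ x, A x ∂ν) := by
  have hsq : ∫ x, √(A x) ^ 2 ∂ν = ∫ x, A x ∂ν :=
    integral_congr_ae (hA₀.mono fun x hx => Real.sq_sqrt hx)
  rw [(memLp_two_sqrt hA).eLpNorm_eq_integral_rpow_norm two_ne_zero ENNReal.ofNat_ne_top]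
  simp only [ENNReal.toReal_ofNat, Real.rpow_ofNat, Real.norm_eq_abs, sq_abs, hsq]
  rw [Real.sqrt_eq_rpow, one_div]

theorem sqrt_integral_le_add (hA : Integrable A ν) (hB : Integrable B ν) (hC : Integrable C ν)
    (hA₀ : 0 ≤ᵐ[ν] A) (hB₀ : 0 ≤ᵐ[ν] B) (hC₀ : 0 ≤ᵐ[ν] C)
    (h : ∀ᵐ x ∂ν, √(A x) ≤ √(B x) + √(C x)) :
    √(∫ x, A x ∂ν) ≤ √(∫ x, B x ∂ν) + √(∫ x, C x ∂ν) := by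
  rw [← ENNReal.ofReal_le_ofReal_iff (by positivity),
    ENNReal.ofReal_add (Real.sqrt_nonneg _) (Real.sqrt_nonneg _), ← eLpNorm_two_sqrt hA hA₀,
    ← eLpNorm_two_sqrt hB hB₀, ← eLpNorm_two_sqrt hC hC₀]
  calc eLpNorm (fun x => √(A x)) 2 ν
      ≤ eLpNorm ((fun x => √(B x)) + fun x => √(C x)) 2 ν :=
        eLpNorm_mono_ae_real <| h.mono fun x hx => by
          rwa [Real.norm_of_nonneg (Real.sqrt_nonneg _)]
    _ ≤ eLpNorm (fun x => √(B x)) 2 ν + eLpNorm (fun x => √(C x)) 2 ν :=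
        eLpNorm_add_le (memLp_two_sqrt hB).1 (memLp_two_sqrt hC).1 one_le_two

end Minkowski

theorem sqrt_jsFun_triangle {a b c : ℝ} (ha : 0 ≤ a) (hb : 0 ≤ b) (hc : 0 ≤ c) :
    √(jsFun a c) ≤ √(jsFun a b) + √(jsFun b c) := by
  rw [jsFun_eq_integral ha hc, jsFun_eq_integral ha hb, jsFun_eq_integral hb hc]
  refine sqrt_integral_le_add (integrableOn_sq_exp_neg_sub_div ha hc)
    (integrableOn_sq_exp_neg_sub_div ha hb) (integrableOn_sq_exp_neg_sub_div hb hc)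
    (ae_of_all _ fun _ => sq_nonneg _) (ae_of_all _ fun _ => sq_nonneg _)
    (ae_of_all _ fun _ => sq_nonneg _) (ae_of_all _ fun t => ?_)
  simp only [Real.sqrt_sq_eq_abs]
  refine (abs_add_le _ _).trans' (le_of_eq ?_)
  rw [← add_div, sub_add_sub_cancel]

section JensenShannon

variable {Ω : Type*} [MeasurableSpace Ω] {ν : Measure Ω}

theorem integrable_mul_log_div {a c : Ω → ℝ} (ha : Integrable a ν) (hc : Integrable c ν)
    (ha₀ : 0 ≤ᵐ[ν] a) (hc₀ : 0 ≤ᵐ[ν] c) :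
    Integrable (fun x => a x * Real.log (a x / ((a x + c x) / 2))) ν := by
  have ham := ha.aemeasurable
  have hcm := hc.aemeasurable
  have hmeas : AEMeasurable (fun x => a x * Real.log (a x / ((a x + c x) / 2))) ν := by fun_prop
  refine (ha.add hc).mono' hmeas.aestronglyMeasurable ?_
  filter_upwards [ha₀, hc₀] with x hax hcx using abs_mul_log_div_le hax hcx

theorem integrable_jsFun {a c : Ω → ℝ} (ha : Integrable a ν) (hc : Integrable c ν)
    (ha₀ : 0 ≤ᵐ[ν] a) (hc₀ : 0 ≤ᵐ[ν] c) : Integrable (fun x => jsFun (a x) (c x)) ν := by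
  have h := integrable_mul_log_div hc ha hc₀ ha₀
  simp only [add_comm (c _)] at h
  exact ((integrable_mul_log_div ha hc ha₀ hc₀).add h).const_mul _

theorem toReal_rnDeriv_nonneg (P : Measure Ω) : 0 ≤ᵐ[ν] fun x => (P.rnDeriv ν x).toReal :=
  ae_of_all _ fun _ => ENNReal.toReal_nonneg

theorem jsFun_rnDeriv_nonneg (P Q : Measure Ω) :
    0 ≤ᵐ[ν] fun x => jsFun (P.rnDeriv ν x).toReal (Q.rnDeriv ν x).toReal :=
  ae_of_all _ fun _ => jsFun_nonneg ENNReal.toReal_nonneg ENNReal.toReal_nonneg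

variable {P Q : Measure Ω} [IsFiniteMeasure P] [IsFiniteMeasure Q]

theorem integrable_jsFun_rnDeriv :
    Integrable (fun x => jsFun (P.rnDeriv ν x).toReal (Q.rnDeriv ν x).toReal) ν :=
  integrable_jsFun Measure.integrable_toReal_rnDeriv Measure.integrable_toReal_rnDeriv
    (toReal_rnDeriv_nonneg P) (toReal_rnDeriv_nonneg Q)

variable [SigmaFinite ν]

theorem rnDeriv_midpoint_toReal :
    ∀ᵐ x ∂ν, (((2 : ℝ≥0∞)⁻¹ • (P + Q)).rnDeriv ν x).toReal =
      ((P.rnDeriv ν x).toReal + (Q.rnDeriv ν x).toReal) / 2 := by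
  filter_upwards [Measure.rnDeriv_smul_left_of_ne_top (P + Q) ν (r := 2⁻¹) (by simp),
    Measure.rnDeriv_add P Q ν, P.rnDeriv_ne_top ν, Q.rnDeriv_ne_top ν] with x hsmul hadd hP hQ
  rw [hsmul, Pi.smul_apply, hadd, Pi.add_apply, smul_eq_mul, ENNReal.toReal_mul,
    ENNReal.toReal_add hP hQ, ENNReal.toReal_inv, ENNReal.toReal_ofNat, inv_mul_eq_div]

theorem llr_midpoint (hP : P ≪ ν) (hQ : Q ≪ ν) :
    ∀ᵐ x ∂P, llr P ((2 : ℝ≥0∞)⁻¹ • (P + Q)) x =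
      Real.log ((P.rnDeriv ν x).toReal /
        (((P.rnDeriv ν x).toReal + (Q.rnDeriv ν x).toReal) / 2)) := by
  have hfin : IsFiniteMeasure ((2 : ℝ≥0∞)⁻¹ • (P + Q)) := Measure.smul_finite _ (by simp)
  have hPm : P ≪ (2 : ℝ≥0∞)⁻¹ • (P + Q) :=
    (Measure.AbsolutelyContinuous.rfl.add_right Q).trans
      (Measure.absolutelyContinuous_smul (by simp))
  have hmν : (2 : ℝ≥0∞)⁻¹ • (P + Q) ≪ ν := (hP.add_left hQ).smul_left _
  filter_upwards [hPm.ae_le (Measure.rnDeriv_eq_div hP hmν),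
    hP.ae_le (rnDeriv_midpoint_toReal (P := P) (Q := Q))] with x hdiv hmid
  rw [llr, hdiv, ENNReal.toReal_div, hmid]

theorem klDiv_midpoint (hP : P ≪ ν) (hQ : Q ≪ ν) :
    klDiv P ((2 : ℝ≥0∞)⁻¹ • (P + Q)) =
      ∫ x, (P.rnDeriv ν x).toReal * Real.log ((P.rnDeriv ν x).toReal /
        (((P.rnDeriv ν x).toReal + (Q.rnDeriv ν x).toReal) / 2)) ∂ν := by
  rw [klDiv, integral_congr_ae (llr_midpoint hP hQ), integral_toReal_rnDeriv_mul hP]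

theorem jsDiv_eq_integral (hP : P ≪ ν) (hQ : Q ≪ ν) :
    jsDiv P Q = ∫ x, jsFun (P.rnDeriv ν x).toReal (Q.rnDeriv ν x).toReal ∂ν := by
  have hint (P Q : Measure Ω) [IsFiniteMeasure P] [IsFiniteMeasure Q] :=
    integrable_mul_log_div (P.integrable_toReal_rnDeriv (ν := ν))
      (Q.integrable_toReal_rnDeriv (ν := ν)) (toReal_rnDeriv_nonneg P) (toReal_rnDeriv_nonneg Q)
  rw [jsDiv, klDiv_midpoint hP hQ, add_comm P Q, klDiv_midpoint hQ hP, ← mul_add,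
    ← integral_add (hint P Q) (hint Q P), ← integral_const_mul]
  simp only [jsFun, add_comm (Q.rnDeriv ν _).toReal]

theorem sqrt_jsDiv_triangle (P Q R : Measure Ω) [IsFiniteMeasure P] [IsFiniteMeasure Q]
    [IsFiniteMeasure R] : √(jsDiv P R) ≤ √(jsDiv P Q) + √(jsDiv Q R) := by
  have hP : P ≪ P + Q + R := (Measure.AbsolutelyContinuous.rfl.add_right Q).add_right R
  have hQ : Q ≪ P + Q + R := (Measure.AbsolutelyContinuous.rfl.add_right' P).add_right R
  have hR : R ≪ P + Q + R := Measure.AbsolutelyContinuous.rfl.add_right' (P + Q)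
  rw [jsDiv_eq_integral hP hR, jsDiv_eq_integral hP hQ, jsDiv_eq_integral hQ hR]
  exact sqrt_integral_le_add integrable_jsFun_rnDeriv integrable_jsFun_rnDeriv
    integrable_jsFun_rnDeriv (jsFun_rnDeriv_nonneg P R) (jsFun_rnDeriv_nonneg P Q)
    (jsFun_rnDeriv_nonneg Q R) (ae_of_all _ fun _ =>
      sqrt_jsFun_triangle ENNReal.toReal_nonneg ENNReal.toReal_nonneg ENNReal.toReal_nonneg)

theorem rnDeriv_withDensity_ofReal_toReal {g : Ω → ℝ} (hg : AEMeasurable g ν)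
    (hg₀ : 0 ≤ᵐ[ν] g) : ∀ᵐ x ∂ν,
      ((ν.withDensity fun x => ENNReal.ofReal (g x)).rnDeriv ν x).toReal = g x := by
  filter_upwards [Measure.rnDeriv_withDensity₀ ν hg.ennreal_ofReal, hg₀] with x hx hgx
  rw [hx, ENNReal.toReal_ofReal hgx]

variable {g h : Ω → ℝ}

theorem jsDiv_withDensity (hg : Integrable g ν) (hh : Integrable h ν) (hg₀ : 0 ≤ᵐ[ν] g)
    (hh₀ : 0 ≤ᵐ[ν] h) :
    jsDiv (ν.withDensity fun x => ENNReal.ofReal (g x))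
      (ν.withDensity fun x => ENNReal.ofReal (h x)) = ∫ x, jsFun (g x) (h x) ∂ν := by
  have := isFiniteMeasure_withDensity_ofReal hg.2
  have := isFiniteMeasure_withDensity_ofReal hh.2
  rw [jsDiv_eq_integral (withDensity_absolutelyContinuous ν _)
    (withDensity_absolutelyContinuous ν _)]
  refine integral_congr_ae ?_
  filter_upwards [rnDeriv_withDensity_ofReal_toReal hg.aemeasurable hg₀,
    rnDeriv_withDensity_ofReal_toReal hh.aemeasurable hh₀] with x hgx hhx
  rw [hgx, hhx]

theorem sqrt_jsDiv_withDensity_le {k : ℝ} (hg : Integrable g ν) (hh : Integrable h ν)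
    (hg₀ : 0 ≤ᵐ[ν] g) (hh₀ : 0 ≤ᵐ[ν] h) (hk : 0 ≤ k)
    (hkg : ∀ᵐ x ∂ν, |g x - h x| ≤ k * g x) (hkh : ∀ᵐ x ∂ν, |g x - h x| ≤ k * h x) :
    √(jsDiv (ν.withDensity fun x => ENNReal.ofReal (g x))
      (ν.withDensity fun x => ENNReal.ofReal (h x))) ≤ k / 2 * √(∫ x, g x ∂ν) := by
  have hle : ∫ x, jsFun (g x) (h x) ∂ν ≤ (k / 2) ^ 2 * ∫ x, g x ∂ν := by
    rw [← integral_const_mul]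
    refine integral_mono_ae (integrable_jsFun hg hh hg₀ hh₀) (hg.const_mul _) ?_
    filter_upwards [hg₀, hh₀, hkg, hkh] with x hgx hhx hxg hxh
    exact jsFun_le_of_abs_sub_le hgx hhx hxg hxh
  rw [jsDiv_withDensity hg hh hg₀ hh₀]
  refine (Real.sqrt_le_sqrt hle).trans_eq ?_
  rw [Real.sqrt_mul (sq_nonneg _), Real.sqrt_sq (by positivity)]

end JensenShannon

section TotalVariation

variable {Ω : Type*} [MeasurableSpace Ω] (P Q : Measure Ω)

theorem tvDist_nonneg : 0 ≤ tvDist P Q := Real.iSup_nonneg fun _ => abs_nonneg _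

variable [IsFiniteMeasure P] [IsFiniteMeasure Q]

theorem abs_measureReal_sub_le_tvDist {s : Set Ω} (hs : MeasurableSet s) :
    |P.real s - Q.real s| ≤ tvDist P Q := by
  refine le_ciSup (f := fun A : {s : Set Ω // MeasurableSet s} => |P.real A.1 - Q.real A.1|)
    ⟨P.real univ + Q.real univ, ?_⟩ ⟨s, hs⟩
  rintro _ ⟨A, rfl⟩
  refine (abs_sub _ _).trans ?_
  rw [abs_of_nonneg measureReal_nonneg, abs_of_nonneg measureReal_nonneg]
  exact add_le_add (measureReal_mono (subset_univ _)) (measureReal_mono (subset_univ _))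

theorem integrableOn_measureReal_le (φ : Ω → ℝ) (M : ℝ) :
    IntegrableOn (fun t => P.real {w | t ≤ φ w}) (Ioc 0 M) := by
  have hanti : Antitone fun t => P.real {w | t ≤ φ w} := fun s t hst =>
    measureReal_mono fun w hw => hst.trans hw
  exact (hanti.antitoneOn _).integrableOn_isCompact isCompact_Icc |>.mono_set Ioc_subset_Icc_self

/-- Layer cake: both integrals are integrals over `t ∈ (0, M]` of the measures of the superlevel
sets `{t ≤ φ}`. -/
theorem abs_integral_sub_integral_le_mul_tvDist {φ : Ω → ℝ} {M : ℝ} (hφ : Measurable φ)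
    (hφ₀ : ∀ w, 0 ≤ φ w) (hφM : ∀ w, φ w ≤ M) (hM : 0 ≤ M) :
    |∫ w, φ w ∂P - ∫ w, φ w ∂Q| ≤ M * tvDist P Q := by
  have hlayer (ρ : Measure Ω) [IsFiniteMeasure ρ] :
      ∫ w, φ w ∂ρ = ∫ t in Ioc 0 M, ρ.real {w | t ≤ φ w} :=
    (Integrable.of_mem_Icc 0 M hφ.aemeasurable
      (ae_of_all _ fun w => ⟨hφ₀ w, hφM w⟩)).integral_eq_integral_Ioc_meas_le
        (ae_of_all _ hφ₀) (ae_of_all _ hφM)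
  rw [hlayer P, hlayer Q,
    ← integral_sub (integrableOn_measureReal_le P φ M) (integrableOn_measureReal_le Q φ M),
    ← Real.norm_eq_abs]
  refine (norm_setIntegral_le_of_norm_le_const (C := tvDist P Q) (by simp) fun t _ =>
    abs_measureReal_sub_le_tvDist P Q (measurableSet_le measurable_const hφ)).trans_eq ?_
  rw [Real.volume_real_Ioc_of_le hM, sub_zero, mul_comm]

end TotalVariation

theorem abs_integral_sub_integral_le_of_le_mul {Ω : Type*} [MeasurableSpace Ω]
    (P Q ρ : Measure Ω) [IsProbabilityMeasure P] [IsProbabilityMeasure Q] [IsProbabilityMeasure ρ]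
    {φ : Ω → ℝ} {C : ℝ} (hφ : Measurable φ) (hφ₀ : ∀ w, 0 ≤ φ w) (hC : 1 ≤ C)
    (hratio : ∀ w w', φ w ≤ C * φ w') :
    |∫ w, φ w ∂P - ∫ w, φ w ∂Q| ≤ (C - 1) * tvDist P Q * ∫ w, φ w ∂ρ := by
  have hne : Nonempty Ω := P.nonempty_of_neZero
  set m := ⨅ w, φ w
  have hm₀ : 0 ≤ m := Real.iInf_nonneg hφ₀
  have hm (w : Ω) : m ≤ φ w := ciInf_le ⟨0, forall_mem_range.2 hφ₀⟩ w
  have hCm (w : Ω) : φ w ≤ C * m := by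
    rw [Real.mul_iInf_of_nonneg (by linarith)]
    exact le_ciInf (hratio w)
  have hint (κ : Measure Ω) [IsFiniteMeasure κ] : Integrable φ κ :=
    .of_mem_Icc m (C * m) hφ.aemeasurable (ae_of_all _ fun w => ⟨hm w, hCm w⟩)
  have hshift (κ : Measure Ω) [IsProbabilityMeasure κ] :
      ∫ w, (φ w - m) ∂κ = ∫ w, φ w ∂κ - m := by
    simp [integral_sub (hint κ) (integrable_const m)]
  have hm_le : m ≤ ∫ w, φ w ∂ρ := by
    simpa using integral_mono (integrable_const m) (hint ρ) hm
  have hCm₀ : 0 ≤ (C - 1) * m := mul_nonneg (sub_nonneg.2 hC) hm₀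
  calc |∫ w, φ w ∂P - ∫ w, φ w ∂Q| = |∫ w, (φ w - m) ∂P - ∫ w, (φ w - m) ∂Q| := by
        rw [hshift, hshift, sub_sub_sub_cancel_right]
    _ ≤ (C - 1) * m * tvDist P Q :=
        abs_integral_sub_integral_le_mul_tvDist P Q (hφ.sub_const m)
          (fun w => sub_nonneg.2 (hm w)) (fun w => by linarith [hCm w]) hCm₀
    _ = (C - 1) * tvDist P Q * m := by ring
    _ ≤ (C - 1) * tvDist P Q * ∫ w, φ w ∂ρ :=
        mul_le_mul_of_nonneg_left hm_le (mul_nonneg (sub_nonneg.2 hC) (tvDist_nonneg P Q))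

section ConditionalDensity

variable {W D : Type*} [MeasurableSpace W] [MeasurableSpace D]

/-- `f d w` is a density in `d`, with respect to `μ`, of the conditional law of the data `d`
given the parameter `w`. The normalisation forces `f · w` to be integrable, since the Bochner
integral of a non-integrable function is `0`. -/
structure IsConditionalDensity (μ : Measure D) (f : D → W → ℝ) : Prop where
  measurable_uncurry : Measurable (Function.uncurry f)
  nonneg : ∀ d w, 0 ≤ f d w
  integral_eq_one : ∀ w, ∫ d, f d w ∂μ = 1

/-- The marginal law `G_P` on data of a conditional density `f` under the prior `P` on
parameters, given by its density `g_P(d) = ∫ f(d, w) dP(w)`. -/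
noncomputable def marginal (μ : Measure D) (f : D → W → ℝ) (P : Measure W) : Measure D :=
  μ.withDensity fun d => ENNReal.ofReal (∫ w, f d w ∂P)

variable {μ : Measure D} [SigmaFinite μ] {f : D → W → ℝ}

namespace IsConditionalDensity

theorem integrable_uncurry (hf : IsConditionalDensity μ f) (P : Measure W) [IsFiniteMeasure P] :
    Integrable (Function.uncurry f) (μ.prod P) := by
  refine (integrable_prod_iff' hf.measurable_uncurry.aestronglyMeasurable).2 ⟨?_, ?_⟩
  · exact ae_of_all _ fun w => .of_integral_ne_zero (by
      simp [Function.uncurry, hf.integral_eq_one])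
  · simp [Function.uncurry, Real.norm_of_nonneg (hf.nonneg _ _), hf.integral_eq_one]

theorem integrable_integral (hf : IsConditionalDensity μ f) (P : Measure W) [IsFiniteMeasure P] :
    Integrable (fun d => ∫ w, f d w ∂P) μ :=
  (hf.integrable_uncurry P).integral_prod_left

theorem integral_integral_eq (hf : IsConditionalDensity μ f) (P : Measure W) [IsFiniteMeasure P] :
    ∫ d, ∫ w, f d w ∂P ∂μ = P.real univ := by
  rw [integral_integral_swap (hf.integrable_uncurry P)]
  simp [hf.integral_eq_one]

theorem isFiniteMeasure_marginal (hf : IsConditionalDensity μ f) (P : Measure W)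
    [IsFiniteMeasure P] : IsFiniteMeasure (marginal μ f P) :=
  isFiniteMeasure_withDensity_ofReal (hf.integrable_integral P).2

theorem sqrt_jsDiv_marginal_le (hf : IsConditionalDensity μ f) (P Q : Measure W)
    [IsProbabilityMeasure P] [IsProbabilityMeasure Q] {C : ℝ} (hC : 1 ≤ C)
    (hratio : ∀ᵐ d ∂μ, ∀ w w', f d w ≤ C * f d w') :
    √(jsDiv (marginal μ f P) (marginal μ f Q)) ≤ (C - 1) * tvDist P Q / 2 := by
  have hbound (ρ : Measure W) [IsProbabilityMeasure ρ] : ∀ᵐ d ∂μ,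
      |∫ w, f d w ∂P - ∫ w, f d w ∂Q| ≤ (C - 1) * tvDist P Q * ∫ w, f d w ∂ρ :=
    hratio.mono fun d => abs_integral_sub_integral_le_of_le_mul P Q ρ
      hf.measurable_uncurry.of_uncurry_left (hf.nonneg d) hC
  have hnonneg (ρ : Measure W) : 0 ≤ᵐ[μ] fun d => ∫ w, f d w ∂ρ :=
    ae_of_all _ fun d => integral_nonneg (hf.nonneg d)
  have hle := sqrt_jsDiv_withDensity_le (hf.integrable_integral P) (hf.integrable_integral Q)
    (hnonneg P) (hnonneg Q) (mul_nonneg (sub_nonneg.2 hC) (tvDist_nonneg P Q)) (hbound P) (hbound Q)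
  simpa [marginal, hf.integral_integral_eq] using hle

end IsConditionalDensity

theorem privacy_leakage_lower_bound_general (hf : IsConditionalDensity μ f) (P Q : Measure W)
    [IsProbabilityMeasure P] [IsProbabilityMeasure Q] (F : Measure D) [IsFiniteMeasure F] {C : ℝ}
    (hC : 1 ≤ C) (hratio : ∀ᵐ d ∂μ, ∀ w w', f d w ≤ C * f d w') :
    √(jsDiv (marginal μ f Q) F) ≥
      √(jsDiv (marginal μ f P) F) - (1 / 2) * (C - 1) * tvDist P Q := by
  have := hf.isFiniteMeasure_marginal P
  have := hf.isFiniteMeasure_marginal Q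
  have htriangle := sqrt_jsDiv_triangle (marginal μ f P) (marginal μ f Q) F
  have hleak := hf.sqrt_jsDiv_marginal_le P Q hC hratio
  linarith

end ConditionalDensity

/-- Lower bound for privacy leakage (single-client version): in the conditional-density
setup, `√(JS(G_Q ‖ F̆)) ≥ √(JS(G_P ‖ F̆)) − (1/2)(e^{2ξ} − 1) · TV(P, Q)`. -/
theorem privacy_leakage_lower_bound
    {W D : Type*} [MeasurableSpace W] [MeasurableSpace D] [Nonempty W]
    (μ : Measure D) [SigmaFinite μ]
    (f : D → W → ℝ) (hf_meas : Measurable (Function.uncurry f))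
    (hf_nonneg : ∀ d w, 0 ≤ f d w)
    (hf_density : ∀ w, ∫ d, f d w ∂μ = 1)
    (P Q : Measure W) [IsProbabilityMeasure P] [IsProbabilityMeasure Q]
    (F : Measure D) [IsProbabilityMeasure F]
    (ξ : ℝ) (hξ : 0 ≤ ξ)
    (hbdd : ∀ d, BddAbove (Set.range fun w => f d w))
    (hinf_pos : ∀ d, 0 < ⨅ w, f d w)
    (hratio : ∀ d, (⨆ w, f d w) ≤ Real.exp (2 * ξ) * ⨅ w, f d w)
    (GP GQ : Measure D)
    (hGP : GP = μ.withDensity fun d => ENNReal.ofReal (∫ w, f d w ∂P))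
    (hGQ : GQ = μ.withDensity fun d => ENNReal.ofReal (∫ w, f d w ∂Q)) :
    Real.sqrt (jsDiv GQ F) ≥
      Real.sqrt (jsDiv GP F) - (1 / 2) * (Real.exp (2 * ξ) - 1) * tvDist P Q := by
  subst hGP hGQ
  refine privacy_leakage_lower_bound_general ⟨hf_meas, hf_nonneg, hf_density⟩ P Q F
    (Real.one_le_exp (by positivity)) (ae_of_all _ fun d w w' => ?_)
  calc f d w ≤ ⨆ w, f d w := le_ciSup (hbdd d) w
    _ ≤ Real.exp (2 * ξ) * ⨅ w, f d w := hratio d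
    _ ≤ Real.exp (2 * ξ) * f d w' := by
      gcongr
      exact ciInf_le ⟨0, forall_mem_range.2 (hf_nonneg d)⟩ w'
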